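/- For every integer T ≥ 1 and every x ∈ ℝ^T, the progress of the gradient of the hard-instance chain function increases by at most one: prog_0(∇F_T(x)) ≤ prog_{1/2}(x) + 1. -/

import Mathlib

open MeasureTheory

/-- The scalar function `Ψ` of the hard-instance construction. -/
noncomputable def Psi (t : ℝ) : ℝ :=
  if t ≤ 1 / 2 then 0 else Real.exp (1 - 1 / (2 * t - 1) ^ 2)

/-- The scalar function `Φ(t) = √e ∫_{−∞}^t e^{−τ²/2} dτ` of the hard-instance
construction. -/
noncomputable def Phi (t : ℝ) : ℝ :=
  Real.sqrt (Real.exp 1) * ∫ τ in Set.Iic t, Real.exp (-τ ^ 2 / 2)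

/-- The hard-instance chain function `F_T` on `ℝ^{T+1}` (so the paper's dimension `T ≥ 1`
is `T + 1` here; the paper's coordinate `xᵢ`, `1 ≤ i ≤ T`, is the zero-based coordinate
`x (i−1)`). -/
noncomputable def chainF (T : ℕ) (x : EuclideanSpace ℝ (Fin (T + 1))) : ℝ :=
  -Psi 1 * Phi (x 0) +
    ∑ i : Fin T,
      (Psi (-(x i.castSucc)) * Phi (-(x i.succ)) - Psi (x i.castSucc) * Phi (x i.succ))

/-- `prog α x` is the largest one-based index `i ∈ {0, 1, …, n}` such that `|xᵢ| > α`
(with the paper's convention `x₀ ≡ 1`, so the value `0` is allowed and returned when no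
coordinate exceeds `α`). -/
noncomputable def prog {n : ℕ} (α : ℝ) (x : EuclideanSpace ℝ (Fin n)) : ℕ :=
  (Finset.univ.filter fun i : Fin n => α < |x i|).sup fun i => (i : ℕ) + 1

/- Since `Ψ` vanishes on `[-1/2, 1/2]`, the coordinate `x_{i+1}` with `i ≥ 1` influences `F_T` only
through the summands linking it to `x_i` and to `x_{i+2}`, and both are zero as long as `|x_i|` and
`|x_{i+1}|` stay at most `1/2`. So at a point of progress `p`, `F_T` is constant along a
nondegenerate segment in the direction of each coordinate beyond `p + 1`. As `F_T` is
differentiable, its partial derivatives in these directions vanish, even when the point is an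
endpoint of the segment. -/

open Set

theorem differentiable_ite_le {E : Type*} [NormedAddCommGroup E] [NormedSpace ℝ E]
    {f g : ℝ → E} {a : ℝ} (hf : Differentiable ℝ f) (hg : Differentiable ℝ g) (h : f a = g a)
    (h' : deriv f a = deriv g a) :
    Differentiable ℝ fun t => if t ≤ a then f t else g t := by
  intro t
  rcases lt_trichotomy t a with ht | rfl | ht
  · refine (hf t).congr_of_eventuallyEq ?_
    filter_upwards [Iio_mem_nhds ht] with s hs using if_pos hs.le
  · have left : HasDerivWithinAt (fun s => if s ≤ t then f s else g s) (deriv f t) (Iic t) t :=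
      (hf t).hasDerivAt.hasDerivWithinAt.congr (fun s hs => if_pos hs) (if_pos le_rfl)
    have right : HasDerivWithinAt (fun s => if s ≤ t then f s else g s) (deriv f t) (Ioi t) t :=
      h' ▸ (hg t).hasDerivAt.hasDerivWithinAt.congr (fun s hs => if_neg (not_le.2 hs))
        ((if_pos le_rfl).trans h)
    have union := left.union right
    rw [Iic_union_Ioi, hasDerivWithinAt_univ] at union
    exact union.differentiableAt
  · refine (hg t).congr_of_eventuallyEq ?_
    filter_upwards [Ioi_mem_nhds ht] with s hs using if_neg (not_le.2 hs)

theorem hasDerivAt_setIntegral_Iic {E : Type*} [NormedAddCommGroup E] [NormedSpace ℝ E]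
    [CompleteSpace E] {f : ℝ → E} {t : ℝ} (hf : Integrable f) (hft : ContinuousAt f t) :
    HasDerivAt (fun u => ∫ τ in Iic u, f τ) (f t) t := by
  have split : (fun u => ∫ τ in Iic u, f τ) =
      fun u => (∫ τ in Iic t, f τ) + ∫ τ in t..u, f τ := by
    ext u
    rw [← intervalIntegral.integral_Iic_sub_Iic hf.integrableOn hf.integrableOn,
      add_sub_cancel]
  rw [split]
  exact (intervalIntegral.integral_hasDerivAt_right hf.intervalIntegrable
    hf.aestronglyMeasurable.stronglyMeasurableAtFilter hft).const_add _

theorem fderiv_apply_eq_zero_of_const_on_line {𝕜 E F : Type*} [NontriviallyNormedField 𝕜]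
    [NormedAddCommGroup E] [NormedSpace 𝕜 E] [NormedAddCommGroup F] [NormedSpace 𝕜 F]
    {f : E → F} {x v : E} {s : Set 𝕜} (hf : DifferentiableAt 𝕜 f x)
    (hs : UniqueDiffWithinAt 𝕜 s 0) (hconst : ∀ t ∈ s, f (x + t • v) = f x) :
    fderiv 𝕜 f x v = 0 := by
  have hline : HasDerivAt (fun t : 𝕜 => f (x + t • v)) (fderiv 𝕜 f x v) 0 :=
    hf.hasFDerivAt.hasLineDerivAt v
  have hzero : HasDerivWithinAt (fun t : 𝕜 => f (x + t • v)) 0 s 0 :=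
    (hasDerivWithinAt_const 0 s (f x)).congr hconst (by simp)
  exact hs.eq_deriv s hline.hasDerivWithinAt hzero

theorem gradient_apply {𝕜 ι : Type*} [RCLike 𝕜] [Fintype ι] [DecidableEq ι]
    (f : EuclideanSpace 𝕜 ι → 𝕜) (x : EuclideanSpace 𝕜 ι) (i : ι) :
    gradient f x i = starRingEnd 𝕜 (fderiv 𝕜 f x (EuclideanSpace.single i 1)) := by
  rw [← inner_gradient_right, EuclideanSpace.inner_single_left, map_one, one_mul]

theorem prog_le_iff {n m : ℕ} {α : ℝ} {x : EuclideanSpace ℝ (Fin n)} :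
    prog α x ≤ m ↔ ∀ i : Fin n, m ≤ i → |x i| ≤ α := by
  simp only [prog, Finset.sup_le_iff, Finset.mem_filter, Finset.mem_univ, true_and]
  refine forall_congr' fun i => ?_
  rw [Nat.succ_le_iff, ← not_imp_not, not_lt, not_lt]

theorem Psi_of_le {t : ℝ} (ht : t ≤ 1 / 2) : Psi t = 0 :=
  if_pos ht

theorem Psi_eq_ite_expNegInvGlue :
    Psi = fun t => if t ≤ 1 / 2 then 0 else Real.exp 1 * expNegInvGlue ((2 * t - 1) ^ 2) := by
  ext t
  refine ite_congr rfl (fun _ => rfl) fun ht => ?_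
  have hpos : 0 < (2 * t - 1) ^ 2 := pow_pos (by linarith) 2
  rw [expNegInvGlue, if_neg hpos.not_ge, ← Real.exp_add, one_div, sub_eq_add_neg]

theorem differentiable_Psi : Differentiable ℝ Psi := by
  have hsq (t : ℝ) : HasDerivAt (fun t : ℝ => (2 * t - 1) ^ 2) (2 * (2 * t - 1) * 2) t := by
    simpa using (((hasDerivAt_id t).const_mul 2).sub_const 1).fun_pow 2
  have hglue : Differentiable ℝ expNegInvGlue :=
    (expNegInvGlue.contDiff (n := 1)).differentiable one_ne_zero
  have hright (t : ℝ) :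
      HasDerivAt (fun t => Real.exp 1 * expNegInvGlue ((2 * t - 1) ^ 2))
        (Real.exp 1 * (deriv expNegInvGlue ((2 * t - 1) ^ 2) * (2 * (2 * t - 1) * 2))) t :=
    ((hglue _).hasDerivAt.comp t (hsq t)).const_mul (Real.exp 1)
  rw [Psi_eq_ite_expNegInvGlue]
  refine differentiable_ite_le (differentiable_const 0)
    (fun t => (hright t).differentiableAt) ?_ ?_
  · simp
  · rw [deriv_const, (hright _).deriv]
    norm_num

theorem differentiable_Phi : Differentiable ℝ Phi := by
  have hint : Integrable fun τ : ℝ => Real.exp (-τ ^ 2 / 2) := by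
    simpa [div_eq_inv_mul] using integrable_exp_neg_mul_sq (b := 2⁻¹) (by norm_num)
  have hcont : Continuous fun τ : ℝ => Real.exp (-τ ^ 2 / 2) := by fun_prop
  exact fun t =>
    ((hasDerivAt_setIntegral_Iic hint hcont.continuousAt).const_mul _).differentiableAt

theorem differentiable_chainF (T : ℕ) : Differentiable ℝ (chainF T) := by
  have hPsi := differentiable_Psi
  have hPhi := differentiable_Phi
  unfold chainF
  fun_prop

theorem chainF_summand_eq_zero {a : ℝ} (ha : |a| ≤ 1 / 2) (b : ℝ) :
    Psi (-a) * Phi (-b) - Psi a * Phi b = 0 := by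
  rw [Psi_of_le ((neg_le_abs a).trans ha), Psi_of_le ((le_abs_self a).trans ha)]
  ring

theorem chainF_eq_of_eq_off_succ {T : ℕ} {x y : EuclideanSpace ℝ (Fin (T + 1))} {i : Fin T}
    (hi : |x i.castSucc| ≤ 1 / 2) (hx : |x i.succ| ≤ 1 / 2) (hy : |y i.succ| ≤ 1 / 2)
    (hxy : ∀ k ≠ i.succ, y k = x k) : chainF T y = chainF T x := by
  have hsummand (k : Fin T) :
      Psi (-(y k.castSucc)) * Phi (-(y k.succ)) - Psi (y k.castSucc) * Phi (y k.succ) =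
        Psi (-(x k.castSucc)) * Phi (-(x k.succ)) - Psi (x k.castSucc) * Phi (x k.succ) := by
    by_cases hcast : k.castSucc = i.succ
    · rw [hcast, chainF_summand_eq_zero hy, chainF_summand_eq_zero hx]
    rw [hxy _ hcast]
    by_cases hsucc : k = i
    · rw [hsucc, chainF_summand_eq_zero hi, chainF_summand_eq_zero hi]
    · rw [hxy _ (Fin.succ_injective T |>.ne hsucc)]
  rw [chainF, chainF, hxy 0 (Fin.succ_ne_zero i).symm, Finset.sum_congr rfl fun k _ => hsummand k]

theorem gradient_chainF_succ_eq_zero {T : ℕ} {x : EuclideanSpace ℝ (Fin (T + 1))} {i : Fin T}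
    (hi : |x i.castSucc| ≤ 1 / 2) (hx : |x i.succ| ≤ 1 / 2) :
    gradient (chainF T) x i.succ = 0 := by
  rw [gradient_apply, conj_trivial]
  have hbounds := abs_le.1 hx
  have hunique : UniqueDiffWithinAt ℝ (Icc (-(1 / 2) - x i.succ) (1 / 2 - x i.succ)) 0 :=
    uniqueDiffOn_Icc (by linarith) 0 ⟨by linarith, by linarith⟩
  refine fderiv_apply_eq_zero_of_const_on_line (differentiable_chainF T x) hunique
    fun t ht => chainF_eq_of_eq_off_succ hi hx ?_ fun k hk => by simp [hk]
  simpa [abs_le, add_comm, sub_le_iff_le_add, le_sub_iff_add_le] using ht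

/-- The chain function is a zero-chain:
`prog_0(∇F_T(x)) ≤ prog_{1/2}(x) + 1` for every `x` (stated for dimension `T + 1`,
i.e. for every paper dimension `T ≥ 1`). -/
theorem chainF_zero_chain (T : ℕ) :
    ∀ x : EuclideanSpace ℝ (Fin (T + 1)),
      prog 0 (gradient (chainF T) x) ≤ prog (1 / 2) x + 1 := by
  intro x
  have hx : ∀ k : Fin (T + 1), prog (1 / 2) x ≤ k → |x k| ≤ 1 / 2 := prog_le_iff.1 le_rfl
  refine prog_le_iff.2 fun j hj => ?_
  obtain ⟨i, rfl⟩ := Fin.exists_succ_eq.2 (Fin.pos_iff_ne_zero.1 (Nat.succ_pos _ |>.trans_le hj))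
  have hi : prog (1 / 2) x ≤ i.castSucc := Nat.le_of_succ_le_succ hj
  have hisucc : prog (1 / 2) x ≤ i.succ := Nat.le_of_succ_le hj
  rw [gradient_chainF_succ_eq_zero (hx i.castSucc hi) (hx i.succ hisucc), abs_zero]
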